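/- arXiv:2405.07080 — 6 statements merged into one kernel-verified Lean document; each statement's English description precedes it below -/
import Mathlib

section
/- Let p be a prime, n ≥ 2, and let q : 𝓗(pⁿ) → 𝓗(pⁿ⁻¹) be componentwise reduction modulo pⁿ⁻¹. For every nonempty subset S of 𝓗(pⁿ), the centralizer C(S) is a normal subgroup of the pseudocentralizer P(S) = P(S; q). -/
theorem pc_mem_ker_iff {G K : Type*} [Group G] [Group K] (q : G →* K) (s g : G) :
    s⁻¹ * g⁻¹ * s * g ∈ q.ker ↔ Commute (q s) (q g) := by
  rw [MonoidHom.mem_ker]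
  simp only [map_mul, map_inv]
  rw [mul_assoc, ← mul_inv_rev, inv_mul_eq_one, commute_iff_eq]
  exact eq_comm

/-- The `q`-pseudocentralizer of a subset `S` of `G`:
all `g` such that `[s, g] = s⁻¹ * g⁻¹ * s * g ∈ ker q` for all `s ∈ S`. -/
def pseudocentralizer {G K : Type*} [Group G] [Group K] (q : G →* K) (S : Set G) :
    Subgroup G where
  carrier := {g : G | ∀ s ∈ S, s⁻¹ * g⁻¹ * s * g ∈ q.ker}
  one_mem' := fun s _ => by
    rw [pc_mem_ker_iff, map_one]
    exact Commute.one_right _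
  mul_mem' := fun {a b} ha hb s hs => by
    rw [pc_mem_ker_iff, map_mul]
    exact ((pc_mem_ker_iff q s a).mp (ha s hs)).mul_right ((pc_mem_ker_iff q s b).mp (hb s hs))
  inv_mem' := fun {a} ha s hs => by
    rw [pc_mem_ker_iff, map_inv]
    exact ((pc_mem_ker_iff q s a).mp (ha s hs)).inv_right

theorem mem_pseudocentralizer_iff {G K : Type*} [Group G] [Group K] {q : G →* K} {S : Set G}
    {g : G} : g ∈ pseudocentralizer q S ↔ ∀ s ∈ S, s⁻¹ * g⁻¹ * s * g ∈ q.ker := Iff.rfl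

/-- The mod `r` Heisenberg group, as triples `(x, y, z)` over `ZMod r`. -/
@[ext]
structure Heis (r : ℕ) where
  x : ZMod r
  y : ZMod r
  z : ZMod r

namespace Heis

variable {r : ℕ}

private def hmul (a b : Heis r) : Heis r := ⟨a.x + b.x, a.y + b.y + a.x * b.z, a.z + b.z⟩
private def hone : Heis r := ⟨0, 0, 0⟩
private def hinv (a : Heis r) : Heis r := ⟨-a.x, a.x * a.z - a.y, -a.z⟩

instance : Group (Heis r) where
  mul := hmul
  one := hone
  inv := hinv
  mul_assoc a b c := by
    show hmul (hmul a b) c = hmul a (hmul b c)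
    ext <;> (dsimp [hmul]; ring)
  one_mul a := by
    show hmul hone a = a
    ext <;> (dsimp [hmul, hone]; ring)
  mul_one a := by
    show hmul a hone = a
    ext <;> (dsimp [hmul, hone]; ring)
  inv_mul_cancel a := by
    show hmul (hinv a) a = hone
    ext <;> (dsimp [hmul, hinv, hone]; ring)

@[simp] theorem mul_x (a b : Heis r) : (a * b).x = a.x + b.x := rfl
@[simp] theorem mul_y (a b : Heis r) : (a * b).y = a.y + b.y + a.x * b.z := rfl
@[simp] theorem mul_z (a b : Heis r) : (a * b).z = a.z + b.z := rfl
@[simp] theorem one_x : (1 : Heis r).x = 0 := rfl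
@[simp] theorem one_y : (1 : Heis r).y = 0 := rfl
@[simp] theorem one_z : (1 : Heis r).z = 0 := rfl
@[simp] theorem inv_x (a : Heis r) : (a⁻¹).x = -a.x := rfl
@[simp] theorem inv_y (a : Heis r) : (a⁻¹).y = a.x * a.z - a.y := rfl
@[simp] theorem inv_z (a : Heis r) : (a⁻¹).z = -a.z := rfl

/-- Componentwise reduction `Heis r → Heis s` when `s ∣ r`. -/
def heisMap {r s : ℕ} (h : s ∣ r) : Heis r →* Heis s where
  toFun a := ⟨ZMod.castHom h (ZMod s) a.x, ZMod.castHom h (ZMod s) a.y, ZMod.castHom h (ZMod s) a.z⟩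
  map_one' := by
    ext <;> simp only [one_x, one_y, one_z, map_zero]
  map_mul' a b := by
    ext <;> simp only [mul_x, mul_y, mul_z, map_add, map_mul]

end Heis

/-- Componentwise reduction modulo `p ^ (n - 1)` from `Heis (p ^ n)` to `Heis (p ^ (n - 1))`. -/
def heisQ (p n : ℕ) : Heis (p ^ n) →* Heis (p ^ (n - 1)) :=
  Heis.heisMap (pow_dvd_pow p (Nat.sub_le n 1))

namespace Heis

theorem commute_iff {r : ℕ} (a b : Heis r) : Commute a b ↔ a.x * b.z = b.x * a.z := by
  rw [commute_iff_eq, Heis.ext_iff]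
  simp only [mul_x, mul_y, mul_z, add_comm b.x, add_comm b.y, add_comm b.z, add_right_inj,
    true_and, and_true]

/-- Centralizers in the Heisenberg group are normal, since commutation only depends on the
images in the abelianization. -/
theorem normal_centralizer {r : ℕ} (S : Set (Heis r)) : (Subgroup.centralizer S).Normal where
  conj_mem c hc g := by
    rw [Subgroup.mem_centralizer_iff] at hc ⊢
    intro s hs
    have h := (commute_iff s c).mp (hc s hs)
    refine (commute_iff s (g * c * g⁻¹)).mpr ?_
    simpa using h

end Heis

theorem centralizer_le_pseudocentralizer {G K : Type*} [Group G] [Group K] (q : G →* K)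
    (S : Set G) : Subgroup.centralizer S ≤ pseudocentralizer q S := fun g hg s hs =>
  (pc_mem_ker_iff q s g).mpr (Commute.map (Subgroup.mem_centralizer_iff.mp hg s hs) q)

/-- for every nonempty `S ⊆ 𝓗(pⁿ)`, the centralizer `C(S)` is a normal subgroup of
the pseudocentralizer `P(S) = P(S; q)`. -/
theorem statement6 (p n : ℕ) (hp : p.Prime) (hn : 2 ≤ n) (S : Set (Heis (p ^ n)))
    (hS : S.Nonempty) :
    Subgroup.centralizer S ≤ pseudocentralizer (heisQ p n) S ∧
      ((Subgroup.centralizer S).subgroupOf (pseudocentralizer (heisQ p n) S)).Normal := by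
  have := Heis.normal_centralizer S
  exact ⟨centralizer_le_pseudocentralizer _ S, inferInstance⟩
end

section
/- Let p be a prime, n ≥ 2, and let q : 𝓗(pⁿ) → 𝓗(pⁿ⁻¹) be componentwise reduction modulo pⁿ⁻¹. For every element h ∈ 𝓗(pⁿ): P(h) = C(h) if and only if h lies in the center Z(𝓗(pⁿ)), where P(h) = P({h}; q). -/
namespace Heis

theorem mem_center_iff {r : ℕ} (h : Heis r) :
    h ∈ Subgroup.center (Heis r) ↔ h.x = 0 ∧ h.z = 0 := by
  rw [Subgroup.mem_center_iff]
  refine ⟨fun hc => ⟨?_, ?_⟩, fun ⟨hx, hz⟩ g => ?_⟩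
  · simpa using ((commute_iff _ _).mp (hc ⟨0, 0, 1⟩)).symm
  · simpa using (commute_iff _ _).mp (hc ⟨1, 0, 0⟩)
  · exact (commute_iff g h).mpr (by simp [hx, hz])

end Heis

theorem ZMod.castHom_pow_eq_zero_of_prime_mul_eq_zero {p n : ℕ} (hp : p.Prime) (hn : 1 ≤ n)
    {a : ZMod (p ^ n)} (ha : (p : ZMod (p ^ n)) * a = 0) :
    ZMod.castHom (pow_dvd_pow p (Nat.sub_le n 1)) (ZMod (p ^ (n - 1))) a = 0 := by
  have : NeZero (p ^ n) := ⟨pow_ne_zero n hp.ne_zero⟩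
  obtain ⟨m, rfl⟩ := ZMod.natCast_zmod_surjective a
  rw [map_natCast, ZMod.natCast_eq_zero_iff]
  rw [← Nat.cast_mul, ZMod.natCast_eq_zero_iff, ← Nat.sub_add_cancel hn, pow_succ'] at ha
  exact Nat.dvd_of_mul_dvd_mul_left hp.pos ha

theorem mem_pseudocentralizer_heisQ_of_prime_mul {p n : ℕ} (hp : p.Prime) (hn : 1 ≤ n)
    {h g : Heis (p ^ n)} (hg : (p : ZMod (p ^ n)) * (h.x * g.z - g.x * h.z) = 0) :
    g ∈ pseudocentralizer (heisQ p n) {h} := by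
  rintro s rfl
  rw [pc_mem_ker_iff, Heis.commute_iff, ← sub_eq_zero]
  have hcast := ZMod.castHom_pow_eq_zero_of_prime_mul_eq_zero hp hn hg
  rw [map_sub, map_mul, map_mul] at hcast
  exact hcast

/-- If `p` is nilpotent and kills no nonzero element of the form `p ^ k * a`, then `a = 0`. -/
theorem eq_zero_of_pow_mul_descent {R : Type*} [Semiring R] {p a : R} {n : ℕ} (hpn : p ^ n = 0)
    (hstep : ∀ k, p * (p ^ k * a) = 0 → p ^ k * a = 0) : a = 0 := by
  have key : ∀ k, p ^ k * a = 0 → a = 0 := by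
    intro k
    induction k with
    | zero => simp
    | succ k ih => exact fun hk => ih (hstep k (by rwa [← mul_assoc, ← pow_succ']))
  exact key n (by rw [hpn, zero_mul])

/-- for every `h ∈ 𝓗(pⁿ)`: `P(h) = C(h)` iff `h ∈ Z(𝓗(pⁿ))`. -/
theorem statement8 (p n : ℕ) (hp : p.Prime) (hn : 2 ≤ n) (h : Heis (p ^ n)) :
    pseudocentralizer (heisQ p n) ({h} : Set (Heis (p ^ n))) =
        Subgroup.centralizer ({h} : Set (Heis (p ^ n))) ↔
      h ∈ Subgroup.center (Heis (p ^ n)) := by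
  have hpn : (p : ZMod (p ^ n)) ^ n = 0 := by
    rw [← Nat.cast_pow, ZMod.natCast_self]
  constructor
  · intro hPC
    have key (g : Heis (p ^ n)) (hg : (p : ZMod (p ^ n)) * (h.x * g.z - g.x * h.z) = 0) :
        h.x * g.z = g.x * h.z := by
      have hmem := mem_pseudocentralizer_heisQ_of_prime_mul hp (by lia) hg
      rw [hPC, Subgroup.mem_centralizer_singleton_iff] at hmem
      exact (Heis.commute_iff h g).mp (Commute.symm hmem)
    refine (Heis.mem_center_iff h).mpr
      ⟨eq_zero_of_pow_mul_descent hpn fun k hk => ?_, eq_zero_of_pow_mul_descent hpn fun k hk => ?_⟩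
    · simpa [mul_comm] using key ⟨0, 0, p ^ k⟩ (by simpa [mul_comm] using hk)
    · simpa using (key ⟨p ^ k, 0, 0⟩ (by simpa using hk)).symm
  · intro hc
    ext g
    have hcomm : Commute h g := (Subgroup.mem_center_iff.mp hc g).symm
    refine iff_of_true ?_ (Subgroup.mem_centralizer_singleton_iff.mpr hcomm.symm)
    rintro s rfl
    exact (pc_mem_ker_iff _ _ _).mpr (hcomm.map _)
end

section
/- Let p be a prime, n ≥ 2, and let q : 𝓗(pⁿ) → 𝓗(pⁿ⁻¹) be componentwise reduction modulo pⁿ⁻¹. If h ∈ 𝓗(pⁿ) is a non-central element, then |P(h)| = p · |C(h)|, and the quotient group P(h)/C(h) is isomorphic to ℤ/pℤ. -/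
namespace Heis

/-- The central coordinate of the commutator `h⁻¹ * g⁻¹ * h * g`, as a homomorphism in `g`. -/
def commutatorCoord {r : ℕ} (h : Heis r) : Heis r →* Multiplicative (ZMod r) where
  toFun g := Multiplicative.ofAdd (h.x * g.z - g.x * h.z)
  map_one' := by simp
  map_mul' a b := by
    rw [← ofAdd_add]
    congr 1
    simp only [mul_x, mul_z]
    ring

theorem commutatorCoord_apply {r : ℕ} (h g : Heis r) :
    commutatorCoord h g = Multiplicative.ofAdd (h.x * g.z - g.x * h.z) := rfl

theorem commute_iff_s9 {r : ℕ} (h g : Heis r) : Commute h g ↔ h.x * g.z - g.x * h.z = 0 := by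
  rw [commute_iff_eq, Heis.ext_iff, sub_eq_zero]
  simp only [mul_x, mul_y, mul_z, add_comm h.x, add_comm h.z, add_comm h.y, true_and, and_true,
    add_right_inj]

theorem mem_centralizer_singleton_iff {r : ℕ} (h g : Heis r) :
    g ∈ Subgroup.centralizer ({h} : Set (Heis r)) ↔ h.x * g.z - g.x * h.z = 0 := by
  rw [Subgroup.mem_centralizer_singleton_iff, ← commute_iff_s9, commute_iff_eq]
  exact eq_comm

theorem mem_pseudocentralizer_singleton_iff {r s : ℕ} (hs : s ∣ r) (h g : Heis r) :
    g ∈ pseudocentralizer (heisMap hs) ({h} : Set (Heis r)) ↔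
      ZMod.castHom hs (ZMod s) (h.x * g.z - g.x * h.z) = 0 := by
  rw [mem_pseudocentralizer_iff]
  simp only [Set.mem_singleton_iff, forall_eq]
  rw [pc_mem_ker_iff, commute_iff_s9, map_sub, map_mul, map_mul]
  rfl

theorem ne_zero_of_notMem_center {r : ℕ} {h : Heis r} (hh : h ∉ Subgroup.center (Heis r)) :
    h.x ≠ 0 ∨ h.z ≠ 0 := by
  by_contra! hc
  refine hh (Subgroup.mem_center_iff.mpr fun g => ?_)
  exact ((commute_iff_s9 h g).mpr (by simp [hc])).eq.symm

end Heis

theorem ZMod.castHom_eq_zero_of_prime_mul_eq_zero {p m : ℕ} (hp : p.Prime)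
    (hm : p ^ m ∣ p ^ (m + 1)) {y : ZMod (p ^ (m + 1))} (hy : (p : ZMod (p ^ (m + 1))) * y = 0) :
    ZMod.castHom hm (ZMod (p ^ m)) y = 0 := by
  obtain ⟨k, rfl⟩ := ZMod.intCast_surjective y
  rw [map_intCast, ZMod.intCast_zmod_eq_zero_iff_dvd]
  have hdvd : ((p ^ (m + 1) : ℕ) : ℤ) ∣ p * k := by
    rw [← ZMod.intCast_zmod_eq_zero_iff_dvd]
    exact_mod_cast hy
  rw [pow_succ', Nat.cast_mul] at hdvd
  exact Int.dvd_of_mul_dvd_mul_left (by exact_mod_cast hp.ne_zero) hdvd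

theorem ZMod.exists_mul_ne_zero_castHom_eq_zero {p m : ℕ} (hp : p.Prime)
    (hm : p ^ m ∣ p ^ (m + 1)) {a : ZMod (p ^ (m + 1))} (ha : a ≠ 0) :
    ∃ c, a * c ≠ 0 ∧ ZMod.castHom hm (ZMod (p ^ m)) (a * c) = 0 := by
  classical
  have hex : ∃ k : ℕ, a * (p : ZMod (p ^ (m + 1))) ^ k = 0 :=
    ⟨m + 1, by rw [← Nat.cast_pow, ZMod.natCast_self, mul_zero]⟩
  obtain ⟨k, hk⟩ : ∃ k, Nat.find hex = k + 1 :=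
    Nat.exists_eq_succ_of_ne_zero fun h0 => ha (by simpa [h0] using Nat.find_spec hex)
  refine ⟨(p : ZMod (p ^ (m + 1))) ^ k, Nat.find_min hex (by omega),
    ZMod.castHom_eq_zero_of_prime_mul_eq_zero hp hm ?_⟩
  have hspec := Nat.find_spec hex
  rw [hk] at hspec
  linear_combination hspec

theorem ZMod.card_ker_castHom {p m : ℕ} (hp : p.Prime) (hm : p ^ m ∣ p ^ (m + 1)) :
    Nat.card (ZMod.castHom hm (ZMod (p ^ m))).toAddMonoidHom.ker = p := by
  have hpos : 0 < p ^ m := pow_pos hp.pos m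
  have hcard := (ZMod.castHom hm (ZMod (p ^ m))).toAddMonoidHom.ker.card_mul_index
  rw [AddSubgroup.index_ker, AddMonoidHom.range_eq_top.mpr (ZMod.castHom_surjective hm),
    AddSubgroup.card_top, Nat.card_zmod, Nat.card_zmod] at hcard
  exact Nat.eq_of_mul_eq_mul_right hpos (hcard.trans (pow_succ' p m))

namespace Heis

theorem exists_surjective_ker_eq_centralizer {p m : ℕ} (hp : p.Prime) (hm : p ^ m ∣ p ^ (m + 1))
    {h : Heis (p ^ (m + 1))} (hh : h ∉ Subgroup.center (Heis (p ^ (m + 1)))) :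
    ∃ φ : pseudocentralizer (heisMap hm) ({h} : Set (Heis (p ^ (m + 1)))) →*
        Multiplicative (ZMod p),
      Function.Surjective φ ∧
        φ.ker = (Subgroup.centralizer ({h} : Set (Heis (p ^ (m + 1))))).subgroupOf
          (pseudocentralizer (heisMap hm) ({h} : Set (Heis (p ^ (m + 1))))) := by
  have := Fact.mk hp
  set P := pseudocentralizer (heisMap hm) ({h} : Set (Heis (p ^ (m + 1))))
  set K := (ZMod.castHom hm (ZMod (p ^ m))).toAddMonoidHom.ker
  have hK : Nat.card K = p := ZMod.card_ker_castHom hp hm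
  let D : P →* Multiplicative (ZMod (p ^ (m + 1))) := (commutatorCoord h).comp P.subtype
  let ψ : P →* AddSubgroup.toSubgroup K := D.codRestrict (AddSubgroup.toSubgroup K)
    fun g => (mem_pseudocentralizer_singleton_iff hm h g).mp g.2
  have hK' : Nat.card (AddSubgroup.toSubgroup K) = p := hK
  have hψ (g : P) : ψ g = 1 ↔ h.x * (g : Heis _).z - (g : Heis _).x * h.z = 0 :=
    Subtype.ext_iff
  have hne : ∃ g : P, ψ g ≠ 1 := by
    simp only [ne_eq, hψ]
    rcases ne_zero_of_notMem_center hh with hx | hz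
    · obtain ⟨c, hc, hc'⟩ := ZMod.exists_mul_ne_zero_castHom_eq_zero hp hm hx
      exact ⟨⟨⟨0, 0, c⟩, (mem_pseudocentralizer_singleton_iff hm h _).mpr (by simpa using hc')⟩,
        by simpa using hc⟩
    · obtain ⟨c, hc, hc'⟩ := ZMod.exists_mul_ne_zero_castHom_eq_zero hp hm hz
      have hneg : h.x * 0 - (-c) * h.z = h.z * c := by ring
      exact ⟨⟨⟨-c, 0, 0⟩, (mem_pseudocentralizer_singleton_iff hm h _).mpr (by rwa [hneg])⟩,
        by rwa [hneg]⟩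
  have hsurj : Function.Surjective ψ := by
    have : Fact (Nat.card (AddSubgroup.toSubgroup K)).Prime := ⟨hK'.symm ▸ hp⟩
    refine MonoidHom.range_eq_top.mp (ψ.range.eq_bot_or_eq_top_of_prime_card.resolve_left ?_)
    intro hbot
    obtain ⟨g, hg⟩ := hne
    exact hg (Subgroup.mem_bot.mp (hbot ▸ ⟨g, rfl⟩))
  let e : AddSubgroup.toSubgroup K ≃* Multiplicative (ZMod p) :=
    mulEquivOfPrimeCardEq (p := p) hK' (by simp)
  refine ⟨e.toMonoidHom.comp ψ, e.surjective.comp hsurj, ?_⟩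
  ext g
  rw [Subgroup.mem_subgroupOf, mem_centralizer_singleton_iff, ← hψ, MonoidHom.mem_ker]
  exact e.map_eq_one_iff

theorem centralizer_le_pseudocentralizer {r s : ℕ} (hs : s ∣ r) (h : Heis r) :
    Subgroup.centralizer ({h} : Set (Heis r)) ≤ pseudocentralizer (heisMap hs) {h} := by
  intro g hg
  rw [mem_pseudocentralizer_singleton_iff, (mem_centralizer_singleton_iff h g).mp hg, map_zero]

end Heis

/-- if `h ∈ 𝓗(pⁿ)` is non-central, then `|P(h)| = p * |C(h)|` and
`P(h)/C(h) ≅ ℤ/pℤ` (phrased via a surjective homomorphism with kernel `C(h)`). -/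
theorem statement9 (p n : ℕ) (hp : p.Prime) (hn : 2 ≤ n) (h : Heis (p ^ n))
    (hh : h ∉ Subgroup.center (Heis (p ^ n))) :
    Nat.card (pseudocentralizer (heisQ p n) ({h} : Set (Heis (p ^ n)))) =
        p * Nat.card (Subgroup.centralizer ({h} : Set (Heis (p ^ n)))) ∧
      ∃ φ : pseudocentralizer (heisQ p n) ({h} : Set (Heis (p ^ n))) →* Multiplicative (ZMod p),
        Function.Surjective φ ∧
          φ.ker = (Subgroup.centralizer ({h} : Set (Heis (p ^ n)))).subgroupOf
            (pseudocentralizer (heisQ p n) ({h} : Set (Heis (p ^ n)))) := by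
  obtain ⟨m, rfl⟩ : ∃ m, n = m + 1 := ⟨n - 1, by omega⟩
  have hm : p ^ m ∣ p ^ (m + 1) := pow_dvd_pow p m.le_succ
  obtain ⟨φ, hφ, hker⟩ := Heis.exists_surjective_ker_eq_centralizer hp hm hh
  refine ⟨?_, φ, hφ, hker⟩
  have hcard := φ.ker.card_mul_index
  rw [Subgroup.index_ker, MonoidHom.range_eq_top.mpr hφ, Subgroup.card_top, hker,
    Nat.card_congr (Subgroup.subgroupOfEquivOfLe
      (Heis.centralizer_le_pseudocentralizer hm h)).toEquiv,
    Nat.card_congr Multiplicative.toAdd, Nat.card_zmod, mul_comm] at hcard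
  exact hcard.symm
end

section
/- Let p be a prime, n ≥ 2, and let q : 𝓗(pⁿ) → 𝓗(pⁿ⁻¹) be componentwise reduction modulo pⁿ⁻¹. If H is a subgroup of 𝓗(pⁿ) that is not contained in the center Z(𝓗(pⁿ)), then the quotient group P(H)/C(H) is isomorphic to (ℤ/pℤ)^k, where k = 1 or k = 2. -/
/-- A homomorphism into `(ℤ/pℤ)^m` becomes surjective, with the same kernel, after replacing the
target by `(ℤ/pℤ)^k` for some `k ≤ m`. -/
theorem exists_surjective_ker_eq {G : Type*} [Group G] {p m : ℕ} (hp : p.Prime)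
    (f : G →* Multiplicative (Fin m → ZMod p)) :
    ∃ k ≤ m, ∃ φ : G →* Multiplicative (Fin k → ZMod p),
      Function.Surjective φ ∧ φ.ker = f.ker := by
  have := Fact.mk hp
  let W : Submodule (ZMod p) (Fin m → ZMod p) :=
    AddSubgroup.toZModSubmodule p (MonoidHom.toAdditiveLeft f).range
  let e : W ≃ₗ[ZMod p] (Fin (Module.finrank (ZMod p) W) → ZMod p) :=
    (Module.finBasis (ZMod p) W).equivFun
  have hW (g : G) : (f g).toAdd ∈ W := ⟨Additive.ofMul g, rfl⟩
  refine ⟨Module.finrank (ZMod p) W, by simpa using W.finrank_le,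
    { toFun := fun g => Multiplicative.ofAdd (e ⟨(f g).toAdd, hW g⟩)
      map_one' := ?_
      map_mul' := fun a b => ?_ }, fun v => ?_, ?_⟩
  · rw [ofAdd_eq_one, e.map_eq_zero_iff]
    ext1
    simp
  · rw [← ofAdd_add, ← map_add]
    congr 2
    ext1
    simp
  · obtain ⟨⟨w, g, rfl⟩, hw⟩ := e.surjective v.toAdd
    exact ⟨g.toMul, congrArg Multiplicative.ofAdd hw⟩
  · ext g
    simp only [MonoidHom.mem_ker, MonoidHom.coe_mk, OneHom.coe_mk, ofAdd_eq_one,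
      e.map_eq_zero_iff, Submodule.mk_eq_zero, toAdd_eq_zero]

/-- The kernel of the reduction `ℤ/pⁿℤ → ℤ/pⁿ⁻¹ℤ` is isomorphic to `ℤ/pℤ`. -/
theorem nonempty_ker_castHom_addEquiv {p n : ℕ} (hp : p.Prime) (hn : 1 ≤ n)
    (h : p ^ (n - 1) ∣ p ^ n) :
    Nonempty ((ZMod.castHom h (ZMod (p ^ (n - 1)))).toAddMonoidHom.ker ≃+ ZMod p) := by
  set f := (ZMod.castHom h (ZMod (p ^ (n - 1)))).toAddMonoidHom
  have := Fact.mk hp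
  have hf : Function.Surjective f := ZMod.castHom_surjective h
  have hcard : Nat.card f.ker = p := by
    have hmul := f.ker.card_mul_index
    rw [AddSubgroup.index_ker, AddMonoidHom.range_eq_top.mpr hf, AddSubgroup.card_top,
      Nat.card_zmod, Nat.card_zmod] at hmul
    exact Nat.eq_of_mul_eq_mul_right (pow_pos hp.pos _)
      (hmul.trans (mul_pow_sub_one (by lia : n ≠ 0) p).symm)
  exact ⟨addEquivOfPrimeCardEq hcard (Nat.card_zmod p)⟩

theorem castHom_eq_zero_of_prime_mul_eq_zero {p n : ℕ} (hp : p.Prime) (hn : 1 ≤ n)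
    (h : p ^ (n - 1) ∣ p ^ n) {a : ZMod (p ^ n)} (ha : (p : ZMod (p ^ n)) * a = 0) :
    ZMod.castHom h (ZMod (p ^ (n - 1))) a = 0 := by
  have : NeZero (p ^ n) := ⟨pow_ne_zero _ hp.ne_zero⟩
  obtain ⟨m, rfl⟩ := ZMod.natCast_zmod_surjective a
  rw [← Nat.cast_mul, ZMod.natCast_eq_zero_iff, ← mul_pow_sub_one (by lia : n ≠ 0) p] at ha
  rw [map_natCast, ZMod.natCast_eq_zero_iff]
  exact Nat.dvd_of_mul_dvd_mul_left hp.pos ha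

namespace Heis

/-- The central coordinate of the commutator `[s, g]`. -/
def commForm {r : ℕ} (s g : Heis r) : ZMod r := s.x * g.z - g.x * s.z

theorem commForm_mul_right {r : ℕ} (s a b : Heis r) :
    commForm s (a * b) = commForm s a + commForm s b := by
  simp only [commForm, mul_x, mul_z]
  ring

theorem commute_iff_commForm_eq_zero {r : ℕ} (s g : Heis r) : s * g = g * s ↔ commForm s g = 0 := by
  simp only [Heis.ext_iff, mul_x, mul_y, mul_z, commForm, sub_eq_zero]
  constructor
  · rintro ⟨-, h, -⟩
    linear_combination h
  · intro h
    exact ⟨add_comm _ _, by linear_combination h, add_comm _ _⟩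

theorem mem_pseudocentralizer_heisMap {r t : ℕ} (h : t ∣ r) {S : Set (Heis r)} {g : Heis r} :
    g ∈ pseudocentralizer (heisMap h) S ↔
      ∀ s ∈ S, ZMod.castHom h (ZMod t) (commForm s g) = 0 := by
  rw [mem_pseudocentralizer_iff]
  refine forall₂_congr fun s _ => ?_
  rw [pc_mem_ker_iff, commute_iff_eq, commute_iff_commForm_eq_zero]
  simp only [commForm, heisMap, MonoidHom.coe_mk, OneHom.coe_mk, map_sub, map_mul]

theorem mem_centralizer_iff_commForm {r : ℕ} {S : Set (Heis r)} {g : Heis r} :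
    g ∈ Subgroup.centralizer S ↔ ∀ s ∈ S, commForm s g = 0 := by
  simp only [Subgroup.mem_centralizer_iff, commute_iff_commForm_eq_zero]

/-- The pairs of integers that lift `(h.x, h.z)` for some `h ∈ H`. -/
def integerLifts {r : ℕ} (H : Subgroup (Heis r)) : Submodule ℤ (ℤ × ℤ) :=
  AddSubgroup.toIntSubmodule
    { carrier := {v | ∃ h ∈ H, h.x = v.1 ∧ h.z = v.2}
      zero_mem' := ⟨1, H.one_mem, by simp⟩
      add_mem' := by
        rintro _ _ ⟨a, ha, hax, haz⟩ ⟨b, hb, hbx, hbz⟩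
        exact ⟨a * b, H.mul_mem ha hb, by simp [hax, hbx], by simp [haz, hbz]⟩
      neg_mem' := by
        rintro _ ⟨a, ha, hax, haz⟩
        exact ⟨a⁻¹, H.inv_mem ha, by simp [hax], by simp [haz]⟩ }

theorem mem_integerLifts {r : ℕ} {H : Subgroup (Heis r)} {v : ℤ × ℤ} :
    v ∈ integerLifts H ↔ ∃ h ∈ H, h.x = v.1 ∧ h.z = v.2 := Iff.rfl

/-- Vanishing of the commutator form on a subgroup can be tested on at most two elements. -/
theorem exists_test_elements {r : ℕ} (H : Subgroup (Heis r)) :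
    ∃ m ≤ 2, ∃ t : Fin m → Heis r, (∀ i, t i ∈ H) ∧
      ∀ g, (∀ i, commForm (t i) g = 0) → ∀ s ∈ H, commForm s g = 0 := by
  obtain ⟨m, ⟨b⟩⟩ := (integerLifts H).nonempty_basis_of_pid (Module.finBasis ℤ (ℤ × ℤ))
  have hm : m ≤ 2 := by
    have := (integerLifts H).finrank_le
    rw [Module.finrank_eq_card_basis b] at this
    simpa using this
  choose t ht htx htz using fun i => mem_integerLifts.mp (b i).2
  refine ⟨m, hm, t, ht, fun g hg s hs => ?_⟩
  obtain ⟨x, hx⟩ := ZMod.intCast_surjective s.x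
  obtain ⟨z, hz⟩ := ZMod.intCast_surjective s.z
  have hv : (x, z) ∈ integerLifts H := ⟨s, hs, hx.symm, hz.symm⟩
  let L : ℤ × ℤ →+ ZMod r :=
    { toFun := fun v => v.1 * g.z - g.x * v.2
      map_zero' := by simp
      map_add' := fun v w => by
        simp only [Prod.fst_add, Prod.snd_add, Int.cast_add]
        ring }
  have hL : L.toIntLinearMap ∘ₗ (integerLifts H).subtype = 0 :=
    b.ext fun i => by simpa [L, commForm, htx, htz] using hg i
  have := LinearMap.congr_fun hL ⟨(x, z), hv⟩
  simpa [L, commForm, hx, hz] using this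

/-- A noncentral subgroup has a pseudocentralizer strictly larger than its centralizer. -/
theorem exists_mem_pseudocentralizer_notMem_centralizer {p n : ℕ} (hp : p.Prime) (hn : 1 ≤ n)
    {H : Subgroup (Heis (p ^ n))} (hH : ¬ H ≤ Subgroup.center (Heis (p ^ n))) :
    ∃ g ∈ pseudocentralizer (heisQ p n) (H : Set (Heis (p ^ n))),
      g ∉ Subgroup.centralizer (H : Set (Heis (p ^ n))) := by
  classical
  obtain ⟨g, hg⟩ : ∃ g, g ∉ Subgroup.centralizer (H : Set (Heis (p ^ n))) := by
    by_contra! h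
    exact hH fun s hs => Subgroup.mem_center_iff.mpr fun g =>
      (Subgroup.mem_centralizer_iff.mp (h g) s hs).symm
  rw [mem_centralizer_iff_commForm] at hg
  have hex : ∃ m : ℕ, ∀ s ∈ H, (p : ZMod (p ^ n)) ^ m * commForm s g = 0 :=
    ⟨n, fun s _ => by rw [← Nat.cast_pow, ZMod.natCast_self, zero_mul]⟩
  obtain ⟨m, hm⟩ : ∃ m, Nat.find hex = m + 1 := by
    refine Nat.exists_eq_succ_of_ne_zero fun h0 => hg fun s hs => ?_
    simpa [h0] using Nat.find_spec hex s hs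
  have hform (s : Heis (p ^ n)) :
      commForm s ⟨(p : ZMod (p ^ n)) ^ m * g.x, 0, (p : ZMod (p ^ n)) ^ m * g.z⟩ =
        (p : ZMod (p ^ n)) ^ m * commForm s g := by
    simp only [commForm]
    ring
  refine ⟨⟨(p : ZMod (p ^ n)) ^ m * g.x, 0, (p : ZMod (p ^ n)) ^ m * g.z⟩,
    (mem_pseudocentralizer_heisMap _).mpr fun s hs => ?_, fun hmem => ?_⟩
  · refine castHom_eq_zero_of_prime_mul_eq_zero hp hn _ ?_
    rw [hform, ← mul_assoc, ← pow_succ', ← hm]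
    exact Nat.find_spec hex s hs
  · rw [mem_centralizer_iff_commForm] at hmem
    refine Nat.find_min hex (m := m) (by lia) fun s hs => ?_
    rw [← hform]
    exact hmem s hs

end Heis

/-- if `H ≤ 𝓗(pⁿ)` is not contained in the center, then `P(H)/C(H) ≅ (ℤ/pℤ)^k`
with `k = 1` or `k = 2` (phrased via a surjective homomorphism with kernel `C(H)`). -/
theorem statement12 (p n : ℕ) (hp : p.Prime) (hn : 2 ≤ n) (H : Subgroup (Heis (p ^ n)))
    (hH : ¬ H ≤ Subgroup.center (Heis (p ^ n))) :
    ∃ k : ℕ, (k = 1 ∨ k = 2) ∧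
      ∃ φ : pseudocentralizer (heisQ p n) (H : Set (Heis (p ^ n))) →*
          Multiplicative (Fin k → ZMod p),
        Function.Surjective φ ∧
          φ.ker = (Subgroup.centralizer (H : Set (Heis (p ^ n)))).subgroupOf
            (pseudocentralizer (heisQ p n) (H : Set (Heis (p ^ n)))) := by
  have hdvd : p ^ (n - 1) ∣ p ^ n := pow_dvd_pow p (Nat.sub_le n 1)
  obtain ⟨e⟩ := nonempty_ker_castHom_addEquiv hp (by lia) hdvd
  obtain ⟨m, hm, t, ht, htest⟩ := Heis.exists_test_elements H
  have hker (i : Fin m) (g : pseudocentralizer (heisQ p n) (H : Set (Heis (p ^ n)))) :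
      Heis.commForm (t i) g ∈ (ZMod.castHom hdvd (ZMod (p ^ (n - 1)))).toAddMonoidHom.ker :=
    (Heis.mem_pseudocentralizer_heisMap hdvd).mp g.2 (t i) (ht i)
  let f : pseudocentralizer (heisQ p n) (H : Set (Heis (p ^ n))) →*
      Multiplicative (Fin m → ZMod p) :=
    MonoidHom.mk' (fun g => Multiplicative.ofAdd fun i => e ⟨Heis.commForm (t i) g, hker i g⟩)
      fun a b => by
        rw [← ofAdd_add]
        congr 1
        funext i
        rw [Pi.add_apply, ← map_add]
        congr 1
        ext1
        exact Heis.commForm_mul_right (t i) a b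
  have hf : f.ker = (Subgroup.centralizer (H : Set (Heis (p ^ n)))).subgroupOf
      (pseudocentralizer (heisQ p n) (H : Set (Heis (p ^ n)))) := by
    ext g
    rw [MonoidHom.mem_ker, Subgroup.mem_subgroupOf, Heis.mem_centralizer_iff_commForm]
    simp only [f, MonoidHom.mk'_apply, ofAdd_eq_one, funext_iff, Pi.zero_apply,
      e.map_eq_zero_iff, AddSubgroup.mk_eq_zero]
    exact ⟨htest g, fun h i => h (t i) (ht i)⟩
  obtain ⟨k, hk, φ, hφ, hφker⟩ := exists_surjective_ker_eq hp f
  have hk0 : k ≠ 0 := by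
    rintro rfl
    obtain ⟨g, hgP, hgC⟩ :=
      Heis.exists_mem_pseudocentralizer_notMem_centralizer hp (by lia) hH
    have hg : (⟨g, hgP⟩ : pseudocentralizer (heisQ p n) (H : Set (Heis (p ^ n)))) ∈ φ.ker :=
      MonoidHom.mem_ker.mpr (funext fun i => i.elim0)
    rw [hφker, hf] at hg
    exact hgC hg
  exact ⟨k, by lia, φ, hφ, hφker.trans hf⟩
end

section
/- Let p be a prime, n ≥ 2, and let q : 𝓗(pⁿ) → 𝓗(pⁿ⁻¹) be componentwise reduction modulo pⁿ⁻¹. For every subgroup H of 𝓗(pⁿ⁻¹), the Chermak-Delgado measures satisfy m(q⁻¹(H)) = p⁴ · m(H), i.e. |q⁻¹(H)| · |C(q⁻¹(H))| = p⁴ · |H| · |C(H)|. -/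
namespace Heis

/-- A Heisenberg element as the pair of its non-central coordinates and its central coordinate. -/
def equivProd (r : ℕ) : Heis r ≃ (ZMod r × ZMod r) × ZMod r where
  toFun a := ((a.x, a.z), a.y)
  invFun t := ⟨t.1.1, t.2, t.1.2⟩

instance (r : ℕ) [NeZero r] : Finite (Heis r) := Finite.of_equiv _ (equivProd r).symm

theorem natCard (r : ℕ) : Nat.card (Heis r) = r ^ 3 := by
  rw [Nat.card_congr (equivProd r), Nat.card_prod, Nat.card_prod, Nat.card_zmod]
  ring

theorem mul_comm_iff {r : ℕ} (a b : Heis r) : a * b = b * a ↔ a.x * b.z = b.x * a.z := by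
  refine ⟨fun h => ?_, fun h => ?_⟩
  · have hy := congrArg Heis.y h
    simp only [mul_y] at hy
    linear_combination hy
  · ext
    · exact add_comm _ _
    · simp only [mul_y]
      linear_combination h
    · exact add_comm _ _

/-- The pairs of non-central coordinates of the elements commuting with all of `S`. -/
def commutingPairs {r : ℕ} (S : Set (Heis r)) : Set (ZMod r × ZMod r) :=
  {t | ∀ a ∈ S, a.x * t.2 = t.1 * a.z}

theorem natCard_centralizer {r : ℕ} (S : Set (Heis r)) :
    Nat.card (Subgroup.centralizer S) = Nat.card (commutingPairs S) * r := by
  have e : Subgroup.centralizer S ≃ commutingPairs S × ZMod r :=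
    { toFun := fun g => (⟨(g.1.x, g.1.z), fun a ha =>
        (mul_comm_iff a g.1).1 (Subgroup.mem_centralizer_iff.1 g.2 a ha)⟩, g.1.y)
      invFun := fun t => ⟨⟨t.1.1.1, t.2, t.1.1.2⟩, Subgroup.mem_centralizer_iff.2 fun a ha =>
        (mul_comm_iff a _).2 (t.1.2 a ha)⟩ }
  rw [Nat.card_congr e, Nat.card_prod, Nat.card_zmod]

theorem heisMap_surjective {r s : ℕ} (h : s ∣ r) : Function.Surjective (heisMap h) := by
  intro b
  obtain ⟨x, hx⟩ := ZMod.castHom_surjective h b.x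
  obtain ⟨y, hy⟩ := ZMod.castHom_surjective h b.y
  obtain ⟨z, hz⟩ := ZMod.castHom_surjective h b.z
  exact ⟨⟨x, y, z⟩, Heis.ext hx hy hz⟩

theorem natCard_comap_heisMap {r s k : ℕ} [NeZero s] (h : s ∣ r) (hr : r = k * s)
    (H : Subgroup (Heis s)) : Nat.card (H.comap (heisMap h)) = k ^ 3 * Nat.card H := by
  have hi := H.index_comap_of_surjective (heisMap_surjective h)
  have h₁ := (H.comap (heisMap h)).card_mul_index
  have h₂ := H.card_mul_index
  rw [natCard] at h₁ h₂
  have h₃ : r ^ 3 = k ^ 3 * s ^ 3 := by rw [hr, mul_pow]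
  rw [hi, h₃, ← h₂, ← mul_assoc] at h₁
  exact Nat.eq_of_mul_eq_mul_right (Nat.pos_of_ne_zero H.index_ne_zero_of_finite) h₁

end Heis

theorem ZMod.natCast_mul_eq_zero_iff_castHom {r s k : ℕ} (h : s ∣ r) (hr : r = k * s)
    (hk : k ≠ 0) (u : ZMod r) : (k : ZMod r) * u = 0 ↔ ZMod.castHom h (ZMod s) u = 0 := by
  obtain ⟨u, rfl⟩ := ZMod.intCast_surjective u
  have hk' : (k : ℤ) ≠ 0 := by exact_mod_cast hk
  rw [map_intCast, ZMod.intCast_zmod_eq_zero_iff_dvd, ← mul_dvd_mul_iff_left hk', ← Nat.cast_mul, ← hr,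
    ← ZMod.intCast_zmod_eq_zero_iff_dvd, Int.cast_mul, Int.cast_natCast]

theorem ZMod.exists_eq_natCast_mul {r s k : ℕ} (hr : r = k * s) (hs : s ≠ 0)
    {u : ZMod r} (hu : (s : ZMod r) * u = 0) : ∃ v : ZMod r, u = k * v := by
  obtain ⟨u, rfl⟩ := ZMod.intCast_surjective u
  have hs' : (s : ℤ) ≠ 0 := by exact_mod_cast hs
  have hd : (r : ℤ) ∣ s * u := by
    rw [← ZMod.intCast_zmod_eq_zero_iff_dvd]
    exact_mod_cast hu
  rw [hr, Nat.cast_mul, mul_comm (k : ℤ), mul_dvd_mul_iff_left hs'] at hd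
  obtain ⟨v, rfl⟩ := hd
  exact ⟨v, by push_cast; rfl⟩

namespace Heis

theorem natCard_commutingPairs_comap {r s k : ℕ} (h : s ∣ r) (hr : r = k * s) (hk : k ≠ 0)
    (hs : s ≠ 0) (H : Subgroup (Heis s)) :
    Nat.card (commutingPairs (H.comap (heisMap h) : Set (Heis r))) =
      Nat.card (commutingPairs (H : Set (Heis s))) := by
  have hπ := ZMod.castHom_surjective h
  set π := ZMod.castHom h (ZMod s) with hπ_def
  have hker := ZMod.natCast_mul_eq_zero_iff_castHom h hr hk
  rw [← hπ_def] at hker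
  let j : ZMod s → ZMod r := fun a => k * Function.surjInv hπ a
  have hj : ∀ u, j (π u) = k * u := fun u => by
    rw [← sub_eq_zero, ← mul_sub, hker, map_sub, Function.surjInv_eq hπ, sub_self]
  have hj_inj : Function.Injective j := fun a b hab => by
    rw [← sub_eq_zero, ← mul_sub, hker, map_sub, Function.surjInv_eq hπ, Function.surjInv_eq hπ,
      sub_eq_zero] at hab
    exact hab
  have hmem : ∀ u v : ZMod r,
      ((k * u, k * v) ∈ commutingPairs (H.comap (heisMap h) : Set (Heis r)) ↔
        (π u, π v) ∈ commutingPairs (H : Set (Heis s))) := by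
    intro u v
    have key : ∀ a : Heis r, a.x * (k * v) = k * u * a.z ↔
        (heisMap h a).x * π v = π u * (heisMap h a).z := fun a => by
      change _ ↔ π a.x * π v = π u * π a.z
      rw [← sub_eq_zero, ← map_mul, ← map_mul, ← sub_eq_zero (a := π _), ← map_sub, ← hker]
      ring_nf
    refine ⟨fun ht b hb => ?_, fun ht a ha => (key a).2 (ht _ ha)⟩
    obtain ⟨a, rfl⟩ := heisMap_surjective h b
    exact (key a).1 (ht a hb)
  symm
  refine Nat.card_eq_of_bijective
    (fun t => ⟨(j t.1.1, j t.1.2), ?_⟩) ⟨fun t t' htt => ?_, fun t => ?_⟩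
  · obtain ⟨⟨a, b⟩, ht⟩ := t
    obtain ⟨u, rfl⟩ := hπ a
    obtain ⟨v, rfl⟩ := hπ b
    simp only [hj]
    exact (hmem u v).2 ht
  · have h' := Prod.ext_iff.1 (congrArg Subtype.val htt)
    exact Subtype.ext (Prod.ext (hj_inj h'.1) (hj_inj h'.2))
  · obtain ⟨⟨a, b⟩, ht⟩ := t
    have hπs : π (s : ZMod r) = 0 := by simp
    have hx : (⟨s, 0, 0⟩ : Heis r) ∈ H.comap (heisMap h) := by
      have : heisMap h ⟨s, 0, 0⟩ = 1 := Heis.ext hπs (map_zero π) (map_zero π)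
      rw [Subgroup.mem_comap, this]
      exact H.one_mem
    have hz : (⟨0, 0, s⟩ : Heis r) ∈ H.comap (heisMap h) := by
      have : heisMap h ⟨0, 0, s⟩ = 1 := Heis.ext (map_zero π) (map_zero π) hπs
      rw [Subgroup.mem_comap, this]
      exact H.one_mem
    obtain ⟨v, rfl⟩ := ZMod.exists_eq_natCast_mul hr hs (u := b) (by simpa using ht _ hx)
    obtain ⟨u, rfl⟩ := ZMod.exists_eq_natCast_mul hr hs (u := a)
      (by simpa [mul_comm, eq_comm] using ht _ hz)
    exact ⟨⟨(π u, π v), (hmem u v).1 ht⟩, Subtype.ext (Prod.ext (hj u) (hj v))⟩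

end Heis

/-- for every subgroup `H ≤ 𝓗(pⁿ⁻¹)`, `m(q⁻¹(H)) = p⁴ * m(H)`, i.e.
`|q⁻¹(H)| * |C(q⁻¹(H))| = p⁴ * |H| * |C(H)|`. -/
theorem statement14 (p n : ℕ) (hp : p.Prime) (hn : 2 ≤ n)
    (H : Subgroup (Heis (p ^ (n - 1)))) :
    Nat.card (H.comap (heisQ p n)) *
        Nat.card (Subgroup.centralizer
          ((H.comap (heisQ p n) : Subgroup (Heis (p ^ n))) : Set (Heis (p ^ n)))) =
      p ^ 4 * (Nat.card H *
        Nat.card (Subgroup.centralizer (H : Set (Heis (p ^ (n - 1)))))) := by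
  have hr : p ^ n = p * p ^ (n - 1) := by
    rw [← pow_succ', Nat.sub_add_cancel (by omega)]
  have hs : p ^ (n - 1) ≠ 0 := pow_ne_zero _ hp.ne_zero
  have : NeZero (p ^ (n - 1)) := ⟨hs⟩
  unfold heisQ
  rw [Heis.natCard_comap_heisMap _ hr, Heis.natCard_centralizer, Heis.natCard_centralizer,
    Heis.natCard_commutingPairs_comap _ hr hp.ne_zero hs, hr]
  ring
end

section
/- Let 1 → G₁ →f G →q G₂ → 1 be a short exact sequence of finite groups. For every subgroup H of G, the pseudo Chermak-Delgado measure satisfies m_s(H) = m(q(H)) · |G₁| · |im f ∩ H|, where m(q(H)) = |q(H)| · |C_{G₂}(q(H))| is the Chermak-Delgado measure of q(H) in G₂. -/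
theorem Subgroup.card_eq_card_map_mul_card_ker_inf {G K : Type*} [Group G] [Group K]
    (q : G →* K) (H : Subgroup G) :
    Nat.card H = Nat.card (H.map q) * Nat.card (q.ker ⊓ H : Subgroup G) := by
  rw [← (q.ker.subgroupOf H).card_mul_index, ← Subgroup.relIndex, Subgroup.relIndex_ker,
    ← Subgroup.inf_subgroupOf_right,
    Nat.card_congr (Subgroup.subgroupOfEquivOfLe inf_le_right).toEquiv, mul_comm]

theorem pseudocentralizer_eq_comap_centralizer {G K : Type*} [Group G] [Group K]
    (q : G →* K) (H : Subgroup G) :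
    pseudocentralizer q (H : Set G) =
      (Subgroup.centralizer ((H.map q : Subgroup K) : Set K)).comap q := by
  ext g
  simp only [mem_pseudocentralizer_iff, pc_mem_ker_iff, Subgroup.mem_comap,
    Subgroup.mem_centralizer_iff, Subgroup.coe_map, Set.forall_mem_image, commute_iff_eq]

theorem Subgroup.card_comap_of_surjective {G K : Type*} [Group G] [Group K]
    {q : G →* K} (hq : Function.Surjective q) (L : Subgroup K) :
    Nat.card (L.comap q) = Nat.card L * Nat.card q.ker := by
  rw [Subgroup.card_eq_card_map_mul_card_ker_inf q, Subgroup.map_comap_eq_self_of_surjective hq,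
    inf_eq_left.mpr (Subgroup.ker_le_comap q L)]

/-- for a short exact sequence `1 → G₁ → G → G₂ → 1` of finite groups and any
subgroup `H ≤ G`: `m_s(H) = m(q(H)) * |G₁| * |im f ∩ H|`. -/
theorem statement15 {G₁ G G₂ : Type*} [Group G₁] [Group G] [Group G₂]
    [Finite G₁] [Finite G] [Finite G₂]
    (f : G₁ →* G) (q : G →* G₂) (hf : Function.Injective f) (hq : Function.Surjective q)
    (hfq : f.range = q.ker) (H : Subgroup G) :
    Nat.card H * Nat.card (pseudocentralizer q (H : Set G)) =
      (Nat.card (H.map q) * Nat.card (Subgroup.centralizer ((H.map q : Subgroup G₂) : Set G₂))) *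
        Nat.card G₁ * Nat.card ((f.range ⊓ H : Subgroup G)) := by
  have hker : Nat.card G₁ = Nat.card q.ker := by
    rw [← hfq]
    exact Nat.card_congr (MonoidHom.ofInjective hf).toEquiv
  rw [pseudocentralizer_eq_comap_centralizer, Subgroup.card_comap_of_surjective hq,
    Subgroup.card_eq_card_map_mul_card_ker_inf q H, hfq, hker]
  ring
end
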